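/- Let w ∈ S_n and fix an antidiagonal index r. If (i₁,j₁), (i₂,j₂) ∈ D(w) satisfy i₁ + j₁ − r_w(i₁,j₁) = i₂ + j₂ − r_w(i₂,j₂) = r (same antidiagonal of B_w under the bijection (i,j) ↦ (i, j − r_w(i,j))), then i₁ < i₂ if and only if j₁ > j₂. -/

import Mathlib

open Finset

/-- The Rothe diagram of a permutation (0-based coordinates). -/
def Rothe {n : ℕ} (w : Equiv.Perm (Fin n)) : Finset (Fin n × Fin n) :=
  Finset.univ.filter (fun p => p.2 < w p.1 ∧ p.1 < w⁻¹ p.2)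

/-- The rank function r_w(i,j) = #{k : k ≤ i and w(k) ≤ j}. -/
def rk {n : ℕ} (w : Equiv.Perm (Fin n)) (i j : Fin n) : ℕ :=
  (Finset.univ.filter (fun k => k ≤ i ∧ w k ≤ j)).card

/-- m_i(w) = #{j : j > i and w(j) < w(i)}. -/
def mrow {n : ℕ} (w : Equiv.Perm (Fin n)) (i : Fin n) : ℕ :=
  (Finset.univ.filter (fun j => i < j ∧ w j < w i)).card

/-- The set of 132-patterns of w. -/
def P132 {n : ℕ} (w : Equiv.Perm (Fin n)) : Finset (Fin n × Fin n × Fin n) :=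
  Finset.univ.filter
    (fun t => t.1 < t.2.1 ∧ t.2.1 < t.2.2 ∧ w t.1 < w t.2.2 ∧ w t.2.2 < w t.2.1)

/-!
By inclusion–exclusion, `i + j - r_w(i,j)` counts, up to a constant, the set
`{k | k ≤ i ∨ w k ≤ j}`. This set grows with `(i, j)` in the product order, and it grows strictly
on reaching a cell `(i, j)` of `D(w)`: a step down adds `i` itself, because `w i > j`, and a step
to the right adds `w⁻¹ j`, because `w⁻¹ j > i`. Hence two cells of `D(w)` with the same
antidiagonal index are never strictly comparable.
-/

section CoveredRows

variable {n : ℕ} {w : Equiv.Perm (Fin n)} {i j : Fin n} {p q : Fin n × Fin n}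

/-- The rows `k` whose dot `(k, w k)` lies weakly above or weakly to the left of the cell `p`.
Its cardinality replaces the antidiagonal index of `p`, avoiding truncated subtraction. -/
def coveredRows (w : Equiv.Perm (Fin n)) (p : Fin n × Fin n) : Finset (Fin n) :=
  {k | k ≤ p.1 ∨ w k ≤ p.2}

theorem mem_Rothe : p ∈ Rothe w ↔ p.2 < w p.1 ∧ p.1 < w⁻¹ p.2 := by
  simp [Rothe]

theorem mem_coveredRows {k : Fin n} : k ∈ coveredRows w p ↔ k ≤ p.1 ∨ w k ≤ p.2 := by
  simp [coveredRows]

theorem coveredRows_mono (w : Equiv.Perm (Fin n)) : Monotone (coveredRows w) := by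
  intro p q hpq k hk
  rw [mem_coveredRows] at hk ⊢
  exact hk.imp (·.trans hpq.1) (·.trans hpq.2)

theorem coveredRows_ssubset_of_lt (hq : q ∈ Rothe w) (hpq : p < q) :
    coveredRows w p ⊂ coveredRows w q := by
  obtain ⟨hcol, hrow⟩ := mem_Rothe.1 hq
  refine (coveredRows_mono w hpq.le).ssubset_of_not_subset fun hsub => ?_
  rcases Prod.lt_iff.1 hpq with ⟨hi, hj⟩ | ⟨hi, hj⟩
  · have hmem : q.1 ∈ coveredRows w p := hsub (mem_coveredRows.2 (.inl le_rfl))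
    exact (mem_coveredRows.1 hmem).elim hi.not_ge (hj.trans_lt hcol).not_ge
  · have hmem : w⁻¹ q.2 ∈ coveredRows w p := hsub (mem_coveredRows.2 (.inr (by simp)))
    exact (mem_coveredRows.1 hmem).elim (hi.trans_lt hrow).not_ge (by simpa using hj)

theorem strictMonoOn_card_coveredRows (w : Equiv.Perm (Fin n)) :
    StrictMonoOn (fun p => #(coveredRows w p)) (Rothe w : Set (Fin n × Fin n)) :=
  fun _ _ _ hq hpq => card_lt_card (coveredRows_ssubset_of_lt hq hpq)

theorem card_coveredRows_add_rk (w : Equiv.Perm (Fin n)) (i j : Fin n) :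
    #(coveredRows w (i, j)) + rk w i j = (i + 1) + (j + 1) := by
  have card_rows : #{k | k ≤ i} = (i : ℕ) + 1 := by
    rw [filter_ge_eq_Iic, Fin.card_Iic]
  have card_cols : #{k | w k ≤ j} = (j : ℕ) + 1 := by
    rw [← Fin.card_Iic j]
    exact card_equiv w (by simp)
  rw [coveredRows, rk, filter_or, filter_and, card_union_add_card_inter, card_rows, card_cols]

theorem rk_le_of_mem_Rothe (h : (i, j) ∈ Rothe w) : rk w i j ≤ j := by
  have hrow : i < w⁻¹ j := (mem_Rothe.1 h).2
  have hsub : insert (w⁻¹ j) (Iic i) ⊆ coveredRows w (i, j) := by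
    intro k hk
    rcases mem_insert.1 hk with rfl | hk
    · exact mem_coveredRows.2 (.inr (by simp))
    · exact mem_coveredRows.2 (.inl (mem_Iic.1 hk))
  have hnotMem : w⁻¹ j ∉ Iic i := mt mem_Iic.1 hrow.not_ge
  have hcard : (i : ℕ) + 2 ≤ #(coveredRows w (i, j)) := calc
    (i : ℕ) + 2 = #(insert (w⁻¹ j) (Iic i)) := by rw [card_insert_of_notMem hnotMem, Fin.card_Iic]
    _ ≤ #(coveredRows w (i, j)) := card_le_card hsub
  have := card_coveredRows_add_rk w i j
  omega

theorem card_coveredRows_of_mem_Rothe (h : (i, j) ∈ Rothe w) :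
    #(coveredRows w (i, j)) = i + (j - rk w i j) + 2 := by
  have := rk_le_of_mem_Rothe h
  have := card_coveredRows_add_rk w i j
  omega

end CoveredRows

/-- Cells of D(w) mapped to the same antidiagonal of B_w under
(i,j) ↦ (i, j − r_w(i,j)) are ordered oppositely in rows and columns. -/
theorem stmt14 {n : ℕ} (w : Equiv.Perm (Fin n)) (i₁ j₁ i₂ j₂ : Fin n)
    (h1 : (i₁, j₁) ∈ Rothe w) (h2 : (i₂, j₂) ∈ Rothe w)
    (hd : (i₁ : ℕ) + ((j₁ : ℕ) - rk w i₁ j₁) = (i₂ : ℕ) + ((j₂ : ℕ) - rk w i₂ j₂)) :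
    i₁ < i₂ ↔ j₂ < j₁ := by
  have hcard : #(coveredRows w (i₁, j₁)) = #(coveredRows w (i₂, j₂)) := by
    rw [card_coveredRows_of_mem_Rothe h1, card_coveredRows_of_mem_Rothe h2, hd]
  have not_lt₁₂ : ¬(i₁, j₁) < (i₂, j₂) := fun hlt =>
    (strictMonoOn_card_coveredRows w h1 h2 hlt).ne hcard
  have not_lt₂₁ : ¬(i₂, j₂) < (i₁, j₁) := fun hlt =>
    (strictMonoOn_card_coveredRows w h2 h1 hlt).ne' hcard
  constructor
  · intro hi
    by_contra! hj
    exact not_lt₁₂ (Prod.mk_lt_mk.2 (.inl ⟨hi, hj⟩))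
  · intro hj
    by_contra! hi
    exact not_lt₂₁ (Prod.mk_lt_mk.2 (.inr ⟨hi, hj⟩))
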